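/- arXiv:1808.08248 — 4 statements merged into one kernel-verified Lean document; each statement's English description precedes it below -/
import Mathlib

section
/- The element σ₃ belongs to the subgroup of H generated by the six elements σ₁σ₂σ₃σ₄σ₅, σ₁σ₄, σ₂σ₅, σ₃σ₆, σ₁σ₃σ₅ and σ₂σ₄σ₆. -/
/-- In a group `H` with elements `σ₁, …, σ₆` such that `σᵢ` and `σⱼ` commute
for every cyclically non-adjacent pair of indices, the element `σ₃` belongs to the subgroup
generated by `σ₁σ₂σ₃σ₄σ₅`, `σ₁σ₄`, `σ₂σ₅`, `σ₃σ₆`, `σ₁σ₃σ₅` and `σ₂σ₄σ₆`. -/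
theorem sigma3_mem_subgroup {H : Type*} [Group H] (σ₁ σ₂ σ₃ σ₄ σ₅ σ₆ : H)
    (h13 : σ₁ * σ₃ = σ₃ * σ₁) (h14 : σ₁ * σ₄ = σ₄ * σ₁) (h15 : σ₁ * σ₅ = σ₅ * σ₁)
    (h24 : σ₂ * σ₄ = σ₄ * σ₂) (h25 : σ₂ * σ₅ = σ₅ * σ₂) (h26 : σ₂ * σ₆ = σ₆ * σ₂)
    (h35 : σ₃ * σ₅ = σ₅ * σ₃) (h36 : σ₃ * σ₆ = σ₆ * σ₃) (h46 : σ₄ * σ₆ = σ₆ * σ₄) :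
    σ₃ ∈ Subgroup.closure
      ({σ₁ * σ₂ * σ₃ * σ₄ * σ₅, σ₁ * σ₄, σ₂ * σ₅, σ₃ * σ₆, σ₁ * σ₃ * σ₅, σ₂ * σ₄ * σ₆} :
        Set H) := by
  set K := Subgroup.closure
      ({σ₁ * σ₂ * σ₃ * σ₄ * σ₅, σ₁ * σ₄, σ₂ * σ₅, σ₃ * σ₆, σ₁ * σ₃ * σ₅, σ₂ * σ₄ * σ₆} :
        Set H) with hK
  have ha : σ₁ * σ₂ * σ₃ * σ₄ * σ₅ ∈ K := Subgroup.subset_closure (by simp)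
  have hb : σ₁ * σ₄ ∈ K := Subgroup.subset_closure (by simp)
  have hc : σ₂ * σ₅ ∈ K := Subgroup.subset_closure (by simp)
  have hf : σ₂ * σ₄ * σ₆ ∈ K := Subgroup.subset_closure (by simp)
  -- the witness is g x g⁻¹ with x = (σ₁σ₄)⁻¹ (σ₁σ₂σ₃σ₄σ₅) (σ₂σ₅)⁻¹, g = (σ₂σ₅)⁻² σ₂σ₄σ₆
  have hg := K.mul_mem (K.inv_mem (K.mul_mem hc hc)) hf
  have hx := K.mul_mem (K.mul_mem (K.inv_mem hb) ha) (K.inv_mem hc)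
  have key : ((σ₂ * σ₅) * (σ₂ * σ₅))⁻¹ * (σ₂ * σ₄ * σ₆) *
      ((σ₁ * σ₄)⁻¹ * (σ₁ * σ₂ * σ₃ * σ₄ * σ₅) * (σ₂ * σ₅)⁻¹) *
      (((σ₂ * σ₅) * (σ₂ * σ₅))⁻¹ * (σ₂ * σ₄ * σ₆))⁻¹ = σ₃ := by
    have e1 : (σ₁ * σ₄)⁻¹ * (σ₁ * σ₂ * σ₃ * σ₄ * σ₅) * (σ₂ * σ₅)⁻¹
        = σ₄⁻¹ * σ₂ * σ₃ * σ₂⁻¹ * σ₄ := by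
      have h : σ₄ * σ₂⁻¹ = σ₂⁻¹ * σ₄ := (show Commute σ₄ σ₂ from h24.symm).inv_right
      calc _ = σ₄⁻¹ * σ₂ * σ₃ * (σ₄ * σ₂⁻¹) := by group
        _ = _ := by rw [h]; group
    have e2 : (σ₂ * σ₄ * σ₆) * (σ₄⁻¹ * σ₂ * σ₃ * σ₂⁻¹ * σ₄)
        = σ₂ * σ₂ * σ₃ * σ₂⁻¹ * σ₂⁻¹ * (σ₂ * σ₄ * σ₆) := by
      have k1 : σ₄ * σ₆ * σ₄⁻¹ = σ₆ := by rw [h46]; group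
      have k2 : Commute σ₆ (σ₂ * σ₃ * σ₂⁻¹) :=
        ((show Commute σ₆ σ₂ from h26.symm).mul_right
          (show Commute σ₆ σ₃ from h36.symm)).mul_right
          (show Commute σ₆ σ₂ from h26.symm).inv_right
      calc _ = σ₂ * (σ₄ * σ₆ * σ₄⁻¹) * (σ₂ * σ₃ * σ₂⁻¹) * σ₄ := by group
        _ = σ₂ * (σ₆ * (σ₂ * σ₃ * σ₂⁻¹)) * σ₄ := by rw [k1]; group
        _ = σ₂ * (σ₂ * σ₃ * σ₂⁻¹) * (σ₆ * σ₄) := by rw [k2.eq]; group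
        _ = _ := by rw [← h46]; group
    have e3 : σ₂ * σ₂ * σ₃ * σ₂⁻¹ * σ₂⁻¹ * ((σ₂ * σ₅) * (σ₂ * σ₅))
        = ((σ₂ * σ₅) * (σ₂ * σ₅)) * σ₃ := by
      have k : (σ₂ * σ₅) * (σ₂ * σ₅) = σ₂ * σ₂ * (σ₅ * σ₅) := by
        calc _ = σ₂ * (σ₅ * σ₂) * σ₅ := by group
          _ = _ := by rw [← h25]; simp only [mul_assoc]
      have k3 : Commute σ₃ (σ₅ * σ₅) :=
        (show Commute σ₃ σ₅ from h35).mul_right h35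
      rw [k]
      calc _ = σ₂ * σ₂ * (σ₃ * (σ₅ * σ₅)) := by group
        _ = _ := by rw [k3.eq]; simp only [mul_assoc]
    rw [e1, mul_assoc _ (σ₂ * σ₄ * σ₆), e2]
    calc _ = ((σ₂ * σ₅) * (σ₂ * σ₅))⁻¹ *
          (σ₂ * σ₂ * σ₃ * σ₂⁻¹ * σ₂⁻¹ * ((σ₂ * σ₅) * (σ₂ * σ₅))) := by
          group
      _ = σ₃ := by rw [e3, inv_mul_cancel_left]
  have := K.mul_mem (K.mul_mem hg hx) (K.inv_mem hg)
  rwa [key] at this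
end

section
/- The subgroup of H generated by the six elements α, σ₁σ₄, σ₂σ₅, σ₃σ₆, σ₁σ₃σ₅ and σ₂σ₄σ₆ is equal to the subgroup of H generated by σ₁, σ₂, σ₃, σ₄, σ₅, σ₆. -/
/-- In a group `H` with elements `σ₁, …, σ₆` commuting for every cyclically
non-adjacent pair of indices, with `α = σ₁σ₂σ₃σ₄σ₅` satisfying the cyclic conjugation
relations `α σᵢ α⁻¹ = σ_{i+1}` (indices mod 6), the subgroup generated by
`α, σ₁σ₄, σ₂σ₅, σ₃σ₆, σ₁σ₃σ₅, σ₂σ₄σ₆` equals the subgroup generated by `σ₁, …, σ₆`. -/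
theorem closure_eq_closure {H : Type*} [Group H] (σ₁ σ₂ σ₃ σ₄ σ₅ σ₆ α : H)
    (h13 : σ₁ * σ₃ = σ₃ * σ₁) (h14 : σ₁ * σ₄ = σ₄ * σ₁) (h15 : σ₁ * σ₅ = σ₅ * σ₁)
    (h24 : σ₂ * σ₄ = σ₄ * σ₂) (h25 : σ₂ * σ₅ = σ₅ * σ₂) (h26 : σ₂ * σ₆ = σ₆ * σ₂)
    (h35 : σ₃ * σ₅ = σ₅ * σ₃) (h36 : σ₃ * σ₆ = σ₆ * σ₃) (h46 : σ₄ * σ₆ = σ₆ * σ₄)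
    (hα : α = σ₁ * σ₂ * σ₃ * σ₄ * σ₅)
    (hc1 : α * σ₁ * α⁻¹ = σ₂) (hc2 : α * σ₂ * α⁻¹ = σ₃) (hc3 : α * σ₃ * α⁻¹ = σ₄)
    (hc4 : α * σ₄ * α⁻¹ = σ₅) (hc5 : α * σ₅ * α⁻¹ = σ₆) (hc6 : α * σ₆ * α⁻¹ = σ₁) :
    Subgroup.closure ({α, σ₁ * σ₄, σ₂ * σ₅, σ₃ * σ₆, σ₁ * σ₃ * σ₅, σ₂ * σ₄ * σ₆} : Set H) =
      Subgroup.closure ({σ₁, σ₂, σ₃, σ₄, σ₅, σ₆} : Set H) := by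
  apply le_antisymm
  · have m1 : σ₁ ∈ Subgroup.closure ({σ₁, σ₂, σ₃, σ₄, σ₅, σ₆} : Set H) :=
      Subgroup.subset_closure (by simp)
    have m2 : σ₂ ∈ Subgroup.closure ({σ₁, σ₂, σ₃, σ₄, σ₅, σ₆} : Set H) :=
      Subgroup.subset_closure (by simp)
    have m3 : σ₃ ∈ Subgroup.closure ({σ₁, σ₂, σ₃, σ₄, σ₅, σ₆} : Set H) :=
      Subgroup.subset_closure (by simp)
    have m4 : σ₄ ∈ Subgroup.closure ({σ₁, σ₂, σ₃, σ₄, σ₅, σ₆} : Set H) :=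
      Subgroup.subset_closure (by simp)
    have m5 : σ₅ ∈ Subgroup.closure ({σ₁, σ₂, σ₃, σ₄, σ₅, σ₆} : Set H) :=
      Subgroup.subset_closure (by simp)
    have m6 : σ₆ ∈ Subgroup.closure ({σ₁, σ₂, σ₃, σ₄, σ₅, σ₆} : Set H) :=
      Subgroup.subset_closure (by simp)
    rw [Subgroup.closure_le]
    rintro x (rfl | rfl | rfl | rfl | rfl | rfl)
    · rw [hα]
      exact mul_mem (mul_mem (mul_mem (mul_mem m1 m2) m3) m4) m5
    · exact mul_mem m1 m4
    · exact mul_mem m2 m5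
    · exact mul_mem m3 m6
    · exact mul_mem (mul_mem m1 m3) m5
    · exact mul_mem (mul_mem m2 m4) m6
  · generalize hK : Subgroup.closure
      ({α, σ₁ * σ₄, σ₂ * σ₅, σ₃ * σ₆, σ₁ * σ₃ * σ₅, σ₂ * σ₄ * σ₆} : Set H) = K
    have kα : α ∈ K := hK ▸ Subgroup.subset_closure (by simp)
    have k14 : σ₁ * σ₄ ∈ K := hK ▸ Subgroup.subset_closure (by simp)
    have k25 : σ₂ * σ₅ ∈ K := hK ▸ Subgroup.subset_closure (by simp)
    have k246 : σ₂ * σ₄ * σ₆ ∈ K := hK ▸ Subgroup.subset_closure (by simp)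
    -- work in the left coset space, with base point `q`
    obtain ⟨q, hq⟩ : ∃ q : H ⧸ K, ∀ x : H, x • q = q ↔ x ∈ K := by
      refine ⟨((1 : H) : H ⧸ K), fun x => ?_⟩
      rw [← MulAction.mem_stabilizer_iff, MulAction.stabilizer_quotient]
    have e14 : σ₄ • q = σ₁⁻¹ • q := by
      rw [eq_inv_smul_iff, smul_smul]; exact (hq _).2 k14
    have e25 : σ₅ • q = σ₂⁻¹ • q := by
      rw [eq_inv_smul_iff, smul_smul]; exact (hq _).2 k25
    have e246 : σ₄ • σ₆ • q = σ₅ • q := by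
      rw [e25, eq_inv_smul_iff, smul_smul, smul_smul]; exact (hq _).2 k246
    have eα : σ₁ • σ₂ • σ₃ • σ₄ • σ₅ • q = q := by
      simp only [smul_smul, ← mul_assoc]; rw [← hα]; exact (hq _).2 kα
    -- `σ₃` fixes `σ₄ • σ₅ • q`
    have f1 : σ₁ • σ₂ • σ₄ • σ₅ • q = q := by
      rw [smul_smul σ₂ σ₄, h24, mul_smul, e25, smul_inv_smul, e14, smul_inv_smul]
    have f2 : σ₃ • σ₄ • σ₅ • q = σ₄ • σ₅ • q :=
      smul_left_cancel σ₂ (smul_left_cancel σ₁ (eα.trans f1.symm))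
    have f3 : σ₄ • σ₅ • q = σ₆ • σ₄ • σ₄ • q := by
      rw [← e246, smul_smul σ₄ σ₆, h46, mul_smul, smul_smul σ₄ σ₆, h46, mul_smul]
    have f4 : σ₃ • σ₄ • σ₄ • q = σ₄ • σ₄ • q := by
      rw [f3, smul_smul σ₃ σ₆, h36, mul_smul] at f2
      exact smul_left_cancel σ₆ f2
    have f5 : σ₄ • σ₄ • q = σ₁⁻¹ • σ₁⁻¹ • q := by
      have c : σ₄ * σ₁⁻¹ = σ₁⁻¹ * σ₄ := (Commute.inv_left (show Commute σ₁ σ₄ from h14)).symm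
      rw [e14, smul_smul, c, mul_smul, e14]
    have c : σ₃ * σ₁⁻¹ = σ₁⁻¹ * σ₃ := (Commute.inv_left (show Commute σ₁ σ₃ from h13)).symm
    have f6 : σ₃ • q = q := by
      rw [f5, smul_smul σ₃, c, mul_smul, smul_smul σ₃, c, mul_smul] at f4
      exact smul_left_cancel _ (smul_left_cancel _ f4)
    have m3 : σ₃ ∈ K := (hq _).1 f6
    have cj : ∀ x ∈ K, α * x * α⁻¹ ∈ K := fun x hx => mul_mem (mul_mem kα hx) (inv_mem kα)
    have m4 : σ₄ ∈ K := hc3 ▸ cj _ m3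
    have m5 : σ₅ ∈ K := hc4 ▸ cj _ m4
    have m6 : σ₆ ∈ K := hc5 ▸ cj _ m5
    have m1 : σ₁ ∈ K := hc6 ▸ cj _ m6
    have m2 : σ₂ ∈ K := hc1 ▸ cj _ m1
    rw [Subgroup.closure_le]
    rintro x (rfl | rfl | rfl | rfl | rfl | rfl) <;> assumption
end

section
/- Let A be an element of the special orthogonal group SO(3) (a linear isometry of EuclideanSpace ℝ (Fin 3) with determinant 1) with A ≠ id. Then the fixed-point set of A on the unit sphere, {x ∈ S² | A x = x}, has exactly two elements. -/
theorem rot_exists_fixed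
    (A : EuclideanSpace ℝ (Fin 3) ≃ₗᵢ[ℝ] EuclideanSpace ℝ (Fin 3))
    (hdet : LinearMap.det
      (A.toLinearEquiv : EuclideanSpace ℝ (Fin 3) →ₗ[ℝ] EuclideanSpace ℝ (Fin 3)) = 1) :
    ∃ v : EuclideanSpace ℝ (Fin 3), ‖v‖ = 1 ∧ A v = v := by
  let b := EuclideanSpace.basisFun (Fin 3) ℝ
  let f : EuclideanSpace ℝ (Fin 3) →ₗ[ℝ] EuclideanSpace ℝ (Fin 3) := A.toLinearEquiv
  let M := LinearMap.toMatrix b.toBasis b.toBasis f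
  have hM : M * star M = 1 :=
    Matrix.mem_unitaryGroup_iff.mp (A.toMatrix_mem_unitaryGroup b b)
  have hMd : M.det = 1 := by
    rw [← hdet]; exact LinearMap.det_toMatrix b.toBasis f
  have h0 : (M - 1).det = 0 := by
    have h1 : M - 1 = M * (-(M - 1).transpose) := by
      have : star M = M.transpose := by
        rw [Matrix.star_eq_conjTranspose, Matrix.conjTranspose_eq_transpose_of_trivial]
      rw [this] at hM
      rw [Matrix.transpose_sub, Matrix.transpose_one, neg_sub, mul_sub, hM, mul_one]
    have h2 := congrArg Matrix.det h1
    rw [Matrix.det_mul, hMd, Matrix.det_neg, Matrix.det_transpose] at h2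
    norm_num at h2
    linarith
  have h3 : LinearMap.det (f - 1) = 0 := by
    rw [← LinearMap.det_toMatrix b.toBasis, map_sub, LinearMap.toMatrix_one]
    exact h0
  obtain ⟨w, hw, hw0⟩ := Submodule.exists_mem_ne_zero_of_ne_bot
    (LinearMap.bot_lt_ker_of_det_eq_zero h3).ne'
  have hAw : A w = w := sub_eq_zero.mp hw
  refine ⟨‖w‖⁻¹ • w, ?_, ?_⟩
  · rw [norm_smul, norm_inv, norm_norm, inv_mul_cancel₀ (norm_ne_zero_iff.mpr hw0)]
  · rw [map_smul, hAw]

theorem rot_finrank_fixed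
    (A : EuclideanSpace ℝ (Fin 3) ≃ₗᵢ[ℝ] EuclideanSpace ℝ (Fin 3))
    (hdet : LinearMap.det
      (A.toLinearEquiv : EuclideanSpace ℝ (Fin 3) →ₗ[ℝ] EuclideanSpace ℝ (Fin 3)) = 1)
    (hA : A ≠ LinearIsometryEquiv.refl ℝ (EuclideanSpace ℝ (Fin 3))) :
    Module.finrank ℝ (ContinuousLinearMap.id ℝ (EuclideanSpace ℝ (Fin 3)) - A).ker ≤ 1 := by
  by_contra hcon
  have hsum := Submodule.finrank_add_finrank_orthogonal
    (ContinuousLinearMap.id ℝ (EuclideanSpace ℝ (Fin 3)) - A).ker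
  rw [finrank_euclideanSpace_fin] at hsum
  obtain ⟨l, hl, hAl⟩ := A.reflections_generate_dim_aux (n := 1) (by omega)
  match l, hl, hAl with
  | [], _, h => exact hA h
  | [v], _, h =>
    simp only [List.map_cons, List.map_nil, List.prod_cons, List.prod_nil, mul_one] at h
    by_cases hv : v = 0
    · apply hA
      rw [h, hv]
      ext1 x
      rw [LinearIsometryEquiv.coe_refl, id]
      exact Submodule.reflection_mem_subspace_eq_self (by simp)
    · have hd := Submodule.det_reflection (Submodule.span ℝ {v})ᗮ
      rw [Submodule.orthogonal_orthogonal, finrank_span_singleton hv, ← h] at hd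
      have : (1 : ℝ) = (-1) ^ 1 := hdet.symm.trans hd
      norm_num at this
  | _ :: _ :: _, hl, _ => simp at hl

/-- a nontrivial rotation `A ∈ SO(3)` (a linear isometry of `ℝ³` with
determinant `1`, not the identity) has exactly two fixed points on the unit sphere `S²`. -/
theorem rotation_two_fixed_points
    (A : EuclideanSpace ℝ (Fin 3) ≃ₗᵢ[ℝ] EuclideanSpace ℝ (Fin 3))
    (hdet : LinearMap.det
      (A.toLinearEquiv : EuclideanSpace ℝ (Fin 3) →ₗ[ℝ] EuclideanSpace ℝ (Fin 3)) = 1)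
    (hA : A ≠ LinearIsometryEquiv.refl ℝ (EuclideanSpace ℝ (Fin 3))) :
    ({x : EuclideanSpace ℝ (Fin 3) |
        x ∈ Metric.sphere (0 : EuclideanSpace ℝ (Fin 3)) 1 ∧ A x = x}).ncard = 2 := by
  obtain ⟨v, hv1, hAv⟩ := rot_exists_fixed A hdet
  have hv0 : v ≠ 0 := by
    rintro rfl
    simp at hv1
  have hle := rot_finrank_fixed A hdet hA
  have hmem : ∀ x, A x = x →
      x ∈ (ContinuousLinearMap.id ℝ (EuclideanSpace ℝ (Fin 3)) - A).ker := by
    intro x hx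
    exact sub_eq_zero.mpr hx.symm
  have hset : {x : EuclideanSpace ℝ (Fin 3) |
      x ∈ Metric.sphere (0 : EuclideanSpace ℝ (Fin 3)) 1 ∧ A x = x} = {v, -v} := by
    ext x
    simp only [Set.mem_ofPred_eq, mem_sphere_zero_iff_norm, Set.mem_insert_iff,
      Set.mem_singleton_iff]
    constructor
    · rintro ⟨hx1, hAx⟩
      obtain ⟨u, hu⟩ := finrank_le_one_iff.mp hle
      obtain ⟨c, hc⟩ := hu ⟨v, hmem v hAv⟩
      obtain ⟨d, hd⟩ := hu ⟨x, hmem x hAx⟩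
      have hc' : c • (u : EuclideanSpace ℝ (Fin 3)) = v := congrArg Subtype.val hc
      have hd' : d • (u : EuclideanSpace ℝ (Fin 3)) = x := congrArg Subtype.val hd
      have hc0 : c ≠ 0 := by
        rintro rfl
        exact hv0 (by rw [← hc', zero_smul])
      have hx : x = (d / c) • v := by
        rw [← hc', ← hd', smul_smul, div_mul_cancel₀ _ hc0]
      have hn : |d / c| = 1 := by
        rw [hx, norm_smul, hv1, mul_one, Real.norm_eq_abs] at hx1
        exact hx1
      rcases eq_or_eq_neg_of_abs_eq hn with h | h
      · left; rw [hx, h, one_smul]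
      · right; rw [hx, h, neg_smul, one_smul]
    · rintro (rfl | rfl)
      · exact ⟨hv1, hAv⟩
      · exact ⟨by rw [norm_neg, hv1], by rw [map_neg, hAv]⟩
  rw [hset]
  refine Set.ncard_pair (fun h => hv0 ?_)
  have h2 : (2 : ℝ) • v = 0 := by
    rw [two_smul]
    exact add_eq_zero_iff_eq_neg.mpr h
  exact (smul_eq_zero.mp h2).resolve_left two_ne_zero
end

section
/- Let U and V be open, simply connected subsets of the plane ℝ² (equivalently of ℂ). Then every connected component of U ∩ V, regarded as a topological subspace, is simply connected. -/
open CategoryTheory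

namespace LatticeLoop

variable {T : Type*} {C : Type*} [Groupoid C]

/-- The morphism of a groupoid associated with a walk. -/
def hom (G : SimpleGraph T) (ob : T → C) (φ : ∀ u w : T, G.Adj u w → (ob u ⟶ ob w)) :
    ∀ {u w : T}, G.Walk u w → (ob u ⟶ ob w)
  | _, _, .nil => 𝟙 _
  | _, _, .cons h p => φ _ _ h ≫ hom G ob φ p

/-- A weighted length of a walk. -/
def cost (G : SimpleGraph T) (pos : T → ℕ × ℕ) : ∀ {u w : T}, G.Walk u w → ℕ
  | _, _, .nil => 0
  | u, _, .cons _ p => ((pos u).1 + (pos u).2 + 1) + cost G pos p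

variable (G : SimpleGraph T) (ob : T → C) (φ : ∀ u w : T, G.Adj u w → (ob u ⟶ ob w))
  (pos : T → ℕ × ℕ)

theorem hom_append {u v w : T} (p : G.Walk u v) (q : G.Walk v w) :
    hom G ob φ (p.append q) = hom G ob φ p ≫ hom G ob φ q := by
  induction p with
  | nil => simp [hom]
  | cons h p ih => simp [hom, ih]

theorem cost_append {u v w : T} (p : G.Walk u v) (q : G.Walk v w) :
    cost G pos (p.append q) = cost G pos p + cost G pos q := by
  induction p with
  | nil => simp [cost]
  | cons h p ih => simp [cost, ih, add_assoc]

theorem hom_concat {u v w : T} (p : G.Walk u v) (h : G.Adj v w) :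
    hom G ob φ (p.concat h) = hom G ob φ p ≫ φ _ _ h := by
  rw [SimpleGraph.Walk.concat_eq_append, hom_append]; simp [hom]

theorem cost_concat {u v w : T} (p : G.Walk u v) (h : G.Adj v w) :
    cost G pos (p.concat h) = cost G pos p + ((pos v).1 + (pos v).2 + 1) := by
  rw [SimpleGraph.Walk.concat_eq_append, cost_append]; simp [cost]

/-- unit adjacency in the square lattice -/
def UAdj (a b : ℕ × ℕ) : Prop :=
  (a.2 = b.2 ∧ (a.1 = b.1 + 1 ∨ b.1 = a.1 + 1)) ∨ (a.1 = b.1 ∧ (a.2 = b.2 + 1 ∨ b.2 = a.2 + 1))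

/-- strict order: first by second coordinate -/
def LLt (a b : ℕ × ℕ) : Prop := a.2 < b.2 ∨ (a.2 = b.2 ∧ a.1 < b.1)

theorem exists_max (l : List T) (hl : l ≠ []) : ∃ v ∈ l, ∀ u ∈ l, ¬ LLt (pos v) (pos u) := by
  induction l with
  | nil => exact absurd rfl hl
  | cons a l ih =>
    by_cases h : l = []
    · subst h; exact ⟨a, by simp, by simp [LLt]⟩
    · obtain ⟨v, hv, hm⟩ := ih h
      by_cases hav : LLt (pos v) (pos a)
      · refine ⟨a, by simp, ?_⟩
        intro u hu
        rcases List.mem_cons.1 hu with rfl | hu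
        · simp [LLt]
        · have := hm u hu
          unfold LLt at *; omega
      · refine ⟨v, by simp [hv], ?_⟩
        intro u hu
        rcases List.mem_cons.1 hu with rfl | hu
        · exact hav
        · exact hm u hu

theorem hom_closed_eq_id
    (hpos : Function.Injective pos) (hadj : ∀ u w, G.Adj u w → UAdj (pos u) (pos w))
    (hφ : ∀ u w (h : G.Adj u w), φ u w h ≫ φ w u h.symm = 𝟙 _)
    (hsq : ∀ (v a b : T) (x y : ℕ) (hva : G.Adj v a) (hbv : G.Adj b v) (q : G.Walk a b),
      pos v = (x + 1, y + 1) →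
      ((pos a = (x, y + 1) ∧ pos b = (x + 1, y)) ∨ (pos b = (x, y + 1) ∧ pos a = (x + 1, y))) →
      (∀ u ∈ q.support, LLt (pos u) (pos v)) →
      ∃ (c : T) (hca : G.Adj c a) (hbc : G.Adj b c), pos c = (x, y) ∧
        φ b v hbv ≫ φ v a hva = φ b c hbc ≫ φ c a hca) :
    ∀ (n : ℕ) (u : T) (p : G.Walk u u), cost G pos p = n → hom G ob φ p = 𝟙 _ := by
  classical
  have conj : ∀ {A B : C} (f : A ⟶ B) (g : B ⟶ A), g ≫ f = 𝟙 _ → f ≫ g = 𝟙 _ := by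
    intro A B f g h
    have : g = Groupoid.inv f := by
      have := congrArg (· ≫ Groupoid.inv f) h
      simpa using this
    simp [this]
  intro n
  induction n using Nat.strong_induction_on with
  | _ n ih =>
  intro u p hp
  obtain ⟨v, hv, hm⟩ := exists_max pos p.support (by simp)
  -- rotate
  set q0 := p.takeUntil v hv with hq
  set r0 := p.dropUntil v hv with hr
  have hqr : q0.append r0 = p := p.take_spec hv
  have hm' : ∀ w ∈ (r0.append q0).support, ¬ LLt (pos v) (pos w) := by
    intro w hw
    rw [SimpleGraph.Walk.mem_support_append_iff] at hw
    apply hm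
    rw [← hqr, SimpleGraph.Walk.mem_support_append_iff]; tauto
  have hcost : cost G pos (r0.append q0) = n := by
    rw [cost_append, ← hp, ← hqr, cost_append, add_comm]
  suffices H : hom G ob φ (r0.append q0) = 𝟙 _ by
    rw [← hqr, hom_append]; rw [hom_append] at H; exact conj _ _ H
  generalize r0.append q0 = p' at hm' hcost
  clear_value q0 r0
  clear hqr hp hm
  cases p' with
  | nil => rfl
  | @cons _ a _ h q =>
  have hne : a ≠ v := h.ne'
  induction q using SimpleGraph.Walk.concatRec with
  | Hnil => exact absurd rfl hne
  | @Hconcat a b v q h' ih2 =>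
  clear ih2
  have hle : ∀ w ∈ q.support, ¬ LLt (pos v) (pos w) := by
    intro w hw
    apply hm'
    simp [SimpleGraph.Walk.support_concat, hw]
  simp only [hom, cost, hom_concat, cost_concat] at hcost ⊢
  by_cases hvq : v ∈ q.support
  · have hs := q.take_spec hvq
    set s1 := q.takeUntil v hvq
    set s2 := q.dropUntil v hvq
    rw [← hs, cost_append] at hcost
    rw [← hs, hom_append]
    have e1 := ih (cost G pos (.cons h s1)) (by simp only [cost]; omega) _ (.cons h s1) rfl
    have e2 := ih (cost G pos (s2.concat h')) (by simp only [cost_concat]; omega) _ (s2.concat h') rfl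
    simp only [hom, hom_concat] at e1 e2
    rw [Category.assoc, e2, Category.comp_id, e1]
  · have hlt : ∀ w ∈ q.support, LLt (pos w) (pos v) := by
      intro w hw
      have h1 := hle w hw
      have h2 : pos w ≠ pos v := fun h => hvq (hpos h ▸ hw)
      have h3 : ¬ ((pos w).1 = (pos v).1 ∧ (pos w).2 = (pos v).2) := fun h => h2 (Prod.ext h.1 h.2)
      unfold LLt at *; omega
    have ha := hlt a (by simp)
    have hb := hlt b (by simp)
    have ua := hadj _ _ h
    have ub := hadj _ _ h'
    by_cases hab : a = b
    · subst hab
      have e := ih (cost G pos q) (by omega) _ q rfl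
      rw [e, Category.id_comp]; exact hφ _ _ h
    · have hab' : ¬ ((pos a).1 = (pos b).1 ∧ (pos a).2 = (pos b).2) :=
        fun h => hab (hpos (Prod.ext h.1 h.2))
      unfold LLt at ha hb
      unfold UAdj at ua ub
      obtain ⟨c, hca, hbc, hc, hrel⟩ := hsq v a b ((pos v).1 - 1) ((pos v).2 - 1) h h' q
        (by ext <;> simp <;> omega)
        (by simp only [Prod.ext_iff]; omega) hlt
      have hc1 : (pos c).1 = (pos v).1 - 1 := by rw [hc]
      have hc2 : (pos c).2 = (pos v).2 - 1 := by rw [hc]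
      have e := ih (cost G pos (.cons hca (q.concat hbc)))
        (by simp only [cost, cost_concat]; omega) _ (.cons hca (q.concat hbc)) rfl
      simp only [hom, hom_concat] at e
      have e' : (hom G ob φ q) ≫ (φ b v h' ≫ φ v a h) = 𝟙 _ := by
        rw [hrel, ← Category.assoc]; exact conj _ _ e
      rw [← Category.assoc] at e'
      exact conj _ _ e'

end LatticeLoop

namespace LatticeLoop

open Complex Set

/-- the lattice point -/
noncomputable def lat (o : ℂ) (δ : ℝ) (u : ℕ × ℕ) : ℂ := ⟨o.re + δ * u.1, o.im + δ * u.2⟩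

theorem log_diff_of_segment {U : Set ℂ} {L : ℂ → ℂ} {p κ a b : ℂ} (hL : ContinuousOn L U)
    (hexp : ∀ z ∈ U, exp (L z) = z - p) (hs : segment ℝ a b ⊆ U) (hκ : κ ≠ 0)
    (hslit : ∀ z ∈ segment ℝ a b, κ * (z - p) ∈ slitPlane) :
    L b - L a = log (κ * (b - p)) - log (κ * (a - p)) := by
  have ha := left_mem_segment ℝ a b
  have hb := right_mem_segment ℝ a b
  have hpc : IsPreconnected (segment ℝ a b) := (convex_segment a b).isPreconnected
  have h2 : ContinuousOn (fun z => log (κ * (z - p)) + (L a - log (κ * (a - p))))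
      (segment ℝ a b) := by
    apply ContinuousOn.add _ continuousOn_const
    apply ContinuousOn.clog _ hslit
    fun_prop
  have hne : ∀ z ∈ segment ℝ a b, κ * (z - p) ≠ 0 := fun z hz => slitPlane_ne_zero (hslit z hz)
  have h3 : EqOn L (fun z => log (κ * (z - p)) + (L a - log (κ * (a - p)))) (segment ℝ a b) := by
    have hinj : ∀ z ∈ segment ℝ a b, exp (L z) =
        exp (log (κ * (z - p)) + (L a - log (κ * (a - p)))) := by
      intro z hz
      rw [Complex.exp_add, Complex.exp_sub, exp_log (hne z hz), exp_log (hne a ha),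
        hexp z (hs hz), hexp a (hs ha)]
      have := hne a ha
      have h1 : a - p ≠ 0 := right_ne_zero_of_mul this
      field_simp
    refine isCoveringMap_exp.eqOn_of_comp_eqOn hpc (hL.mono hs) h2 ?_ ha (by simp)
    intro z hz
    exact Subtype.ext (hinj z hz)
  have := h3 hb
  simp only at this
  rw [this]; ring

theorem slit_of {z p d : ℂ} (hd : d ≠ 0) (h : ∀ r : ℝ, 0 ≤ r → z - p ≠ r * d) :
    (-d⁻¹) * (z - p) ∈ slitPlane := by
  rw [mem_slitPlane_iff_not_le_zero]
  intro hle
  rw [Complex.le_def] at hle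
  apply h (-((-d⁻¹) * (z - p)).re) (by simpa using hle.1)
  have : ((((-d⁻¹) * (z - p)).re : ℝ) : ℂ) = (-d⁻¹) * (z - p) := by
    apply Complex.ext
    · simp
    · rw [ofReal_im, hle.2]; simp
  push_cast
  rw [this]
  field_simp

theorem slit_of' {z p d : ℂ} (hd : d ≠ 0) (h : ∀ r : ℝ, 0 ≤ r → z - p ≠ -(r * d)) :
    d⁻¹ * (z - p) ∈ slitPlane := by
  have := slit_of (z := z) (p := p) (d := -d) (neg_ne_zero.2 hd) (by simpa using h)
  simpa using this

theorem log_neg_sub_log_pos {z : ℂ} (h : 0 < z.im) : log (-z) - log z = -(Real.pi * I) := by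
  simp only [log, norm_neg, arg_neg_eq_arg_sub_pi_of_im_pos h]; push_cast; ring

theorem log_neg_sub_log_neg {z : ℂ} (h : z.im < 0) : log (-z) - log z = Real.pi * I := by
  simp only [log, norm_neg, arg_neg_eq_arg_add_pi_of_im_neg h]; push_cast; ring

theorem mem_seg_lat {o : ℂ} {δ : ℝ} {u w : ℕ × ℕ} {z : ℂ}
    (hz : z ∈ segment ℝ (lat o δ u) (lat o δ w)) :
    ∃ τ : ℝ, 0 ≤ τ ∧ τ ≤ 1 ∧ z.re = o.re + δ * (u.1 + τ * (w.1 - u.1)) ∧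
      z.im = o.im + δ * (u.2 + τ * (w.2 - u.2)) := by
  rw [segment_eq_image'] at hz
  obtain ⟨τ, ⟨h0, h1⟩, rfl⟩ := hz
  refine ⟨τ, h0, h1, ?_, ?_⟩ <;> simp [lat] <;> ring

/-- Edges below `v` avoid the ray from `p` through `v`. -/
theorem edge_slit {o : ℂ} {δ : ℝ} (hδ : 0 < δ) {U : Set ℂ} {p : ℂ} (hp : p ∉ U)
    {x y : ℕ} {s t : ℝ} (hs : 0 < s) (hs1 : s ≤ 1) (ht : 0 < t) (ht1 : t ≤ 1)
    (hpre : p.re = o.re + δ * ((x : ℝ) + 1 - s)) (hpim : p.im = o.im + δ * ((y : ℝ) + 1 - t))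
    {u w : ℕ × ℕ} (huw : UAdj u w) (hu : LLt u (x + 1, y + 1)) (hw : LLt w (x + 1, y + 1))
    (hU : segment ℝ (lat o δ u) (lat o δ w) ⊆ U) {z : ℂ}
    (hz : z ∈ segment ℝ (lat o δ u) (lat o δ w)) (r : ℝ) (hr : 0 ≤ r) :
    z - p ≠ r * (lat o δ (x + 1, y + 1) - p) := by
  intro heq
  have hzU := hU hz
  obtain ⟨τ, h0, h1, hre, him⟩ := mem_seg_lat hz
  have e1 := congrArg Complex.re heq
  have e2 := congrArg Complex.im heq
  simp only [lat, sub_re, sub_im, re_ofReal_mul, im_ofReal_mul] at e1 e2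
  rw [hre, hpre] at e1
  rw [him, hpim] at e2
  push_cast at e1 e2
  have f1 : (u.1 : ℝ) + τ * (w.1 - u.1) = x + 1 - s + r * s := by
    apply mul_left_cancel₀ hδ.ne'; linarith
  have f2 : (u.2 : ℝ) + τ * (w.2 - u.2) = y + 1 - t + r * t := by
    apply mul_left_cancel₀ hδ.ne'; linarith
  rcases lt_trichotomy r 1 with hr1 | hr1 | hr1
  · rcases hr.eq_or_lt with hr0 | hr0
    · apply hp
      have : z - p = 0 := by rw [heq, ← hr0]; simp
      rwa [← sub_eq_zero.1 this]
    · have g1 : x + 1 - s + r * s < (x : ℝ) + 1 := by nlinarith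
      have g2 : (x : ℝ) < x + 1 - s + r * s := by nlinarith
      have g3 : y + 1 - t + r * t < (y : ℝ) + 1 := by nlinarith
      have g4 : (y : ℝ) < y + 1 - t + r * t := by nlinarith
      rcases huw with ⟨h, -⟩ | ⟨h, -⟩
      · rw [← f2, h] at g3 g4
        simp only [sub_self, mul_zero, add_zero] at g3 g4
        norm_cast at g3 g4; omega
      · rw [← f1, h] at g1 g2
        simp only [sub_self, mul_zero, add_zero] at g1 g2
        norm_cast at g1 g2; omega
  · subst hr1
    unfold LLt at hu hw
    simp only at hu hw
    rcases huw with ⟨h, -⟩ | ⟨h, -⟩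
    · rw [h] at f2
      have h2 : (w.2 : ℝ) = y + 1 := by linarith
      norm_cast at h2
      have a1 : (u.1 : ℝ) ≤ x := by norm_cast; omega
      have a2 : (w.1 : ℝ) ≤ x := by norm_cast; omega
      nlinarith
    · rw [h] at f1
      have h2 : (w.1 : ℝ) = x + 1 := by linarith
      norm_cast at h2
      have a1 : (u.2 : ℝ) ≤ y := by norm_cast; omega
      have a2 : (w.2 : ℝ) ≤ y := by norm_cast; omega
      nlinarith
  · unfold LLt at hu hw
    simp only at hu hw
    have a1 : (u.2 : ℝ) ≤ y + 1 := by norm_cast; omega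
    have a2 : (w.2 : ℝ) ≤ y + 1 := by norm_cast; omega
    nlinarith

theorem walk_log {o : ℂ} {δ : ℝ} (hδ : 0 < δ) {U : Set ℂ} {p : ℂ} {L : ℂ → ℂ}
    (hL : ContinuousOn L U) (hexp : ∀ z ∈ U, exp (L z) = z - p) (hp : p ∉ U)
    {x y : ℕ} {s t : ℝ} (hs : 0 < s) (hs1 : s ≤ 1) (ht : 0 < t) (ht1 : t ≤ 1)
    (hpre : p.re = o.re + δ * ((x : ℝ) + 1 - s)) (hpim : p.im = o.im + δ * ((y : ℝ) + 1 - t))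
    (hd : lat o δ (x + 1, y + 1) - p ≠ 0)
    {T : Type*} (G : SimpleGraph T) (pos : T → ℕ × ℕ)
    (hadj : ∀ u w, G.Adj u w → UAdj (pos u) (pos w))
    (hseg : ∀ u w, G.Adj u w → segment ℝ (lat o δ (pos u)) (lat o δ (pos w)) ⊆ U)
    {a b : T} (q : G.Walk a b) (hq : ∀ u ∈ q.support, LLt (pos u) (x + 1, y + 1)) :
    L (lat o δ (pos b)) - L (lat o δ (pos a)) =
      log (-(lat o δ (x + 1, y + 1) - p)⁻¹ * (lat o δ (pos b) - p)) -
      log (-(lat o δ (x + 1, y + 1) - p)⁻¹ * (lat o δ (pos a) - p)) := by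
  induction q with
  | nil => simp
  | @cons a c b h q ih =>
    have ih := ih (fun u hu => hq u (by simp [hu]))
    have := log_diff_of_segment (κ := -(lat o δ (x + 1, y + 1) - p)⁻¹) hL hexp (hseg _ _ h)
      (neg_ne_zero.2 (inv_ne_zero hd)) (fun z hz => slit_of hd (fun r hr =>
        edge_slit hδ hp hs hs1 ht ht1 hpre hpim (hadj _ _ h) (hq a (by simp)) (hq c (by simp))
          (hseg _ _ h) hz r hr))
    linear_combination this + ih

theorem no_log {o : ℂ} {δ : ℝ} (hδ : 0 < δ) {U : Set ℂ} {p : ℂ} {L : ℂ → ℂ}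
    (hL : ContinuousOn L U) (hexp : ∀ z ∈ U, exp (L z) = z - p) (hp : p ∉ U)
    {x y : ℕ} {s t : ℝ} (hs : 0 < s) (hs1 : s ≤ 1) (ht : 0 < t) (ht1 : t ≤ 1)
    (hpre : p.re = o.re + δ * ((x : ℝ) + 1 - s)) (hpim : p.im = o.im + δ * ((y : ℝ) + 1 - t))
    {T : Type*} (G : SimpleGraph T) (pos : T → ℕ × ℕ)
    (hadj : ∀ u w, G.Adj u w → UAdj (pos u) (pos w))
    (hseg : ∀ u w, G.Adj u w → segment ℝ (lat o δ (pos u)) (lat o δ (pos w)) ⊆ U)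
    {v a b : T} (hv : pos v = (x + 1, y + 1)) (hva : G.Adj v a) (hbv : G.Adj b v)
    (hab : ((pos a = (x, y + 1) ∧ pos b = (x + 1, y)) ∨
      (pos b = (x, y + 1) ∧ pos a = (x + 1, y))))
    (q : G.Walk a b) (hq : ∀ u ∈ q.support, LLt (pos u) (pos v)) : False := by
  have hd : lat o δ (x + 1, y + 1) - p = ⟨δ * s, δ * t⟩ := by
    apply Complex.ext
    · simp [lat, hpre]; ring
    · simp [lat, hpim]; ring
  have hd0 : lat o δ (x + 1, y + 1) - p ≠ 0 := by
    rw [hd]; intro h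
    have := congrArg Complex.re h
    simp at this
    rcases this with h | h <;> linarith
  rw [hv] at hq
  have W := walk_log hδ hL hexp hp hs hs1 ht ht1 hpre hpim hd0 G pos hadj hseg q hq
  set d := lat o δ (x + 1, y + 1) - p with hdd
  -- the two edges at `v`
  have key : ∀ w : ℕ × ℕ, (w = (x, y + 1) ∨ w = (x + 1, y)) → ∀ z ∈ segment ℝ (lat o δ w)
      (lat o δ (x + 1, y + 1)), d⁻¹ * (z - p) ∈ slitPlane := by
    intro w hw z hz
    apply slit_of' hd0
    intro r hr heq
    obtain ⟨τ, h0, h1, hre, him⟩ := mem_seg_lat hz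
    have e1 := congrArg Complex.re heq
    have e2 := congrArg Complex.im heq
    rw [hd] at e1 e2
    simp only [sub_re, sub_im, neg_re, neg_im, re_ofReal_mul, im_ofReal_mul] at e1 e2
    rw [hre, hpre] at e1
    rw [him, hpim] at e2
    have := mul_pos hδ hs
    have := mul_pos hδ ht
    rcases hw with rfl | rfl
    · push_cast at e2
      nlinarith [mul_nonneg hr (mul_pos hδ ht).le]
    · push_cast at e1
      nlinarith [mul_nonneg hr (mul_pos hδ hs).le]
  have E1 := log_diff_of_segment (κ := d⁻¹) hL hexp (hv ▸ hseg _ _ hbv) (inv_ne_zero hd0)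
    (key (pos b) (by tauto))
  have E2 := log_diff_of_segment (κ := d⁻¹) hL hexp (hv ▸ hseg _ _ hva.symm) (inv_ne_zero hd0)
    (key (pos a) (by tauto))
  have im1 : 0 < (d⁻¹ * (lat o δ (x, y + 1) - p)).im := by
    have e : d⁻¹ * (lat o δ (x, y + 1) - p) = 1 - δ * d⁻¹ := by
      have : lat o δ (x, y + 1) - p = d - δ := by
        rw [hd]; apply Complex.ext
        · simp [lat, hpre]; ring
        · simp [lat, hpim]; ring
      rw [this, mul_sub, inv_mul_cancel₀ hd0]; ring
    rw [e, sub_im, im_ofReal_mul, inv_im, hd]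
    have hn : 0 < normSq (⟨δ * s, δ * t⟩ : ℂ) := normSq_pos.2 (hd ▸ hd0)
    simp only [one_im, zero_sub, neg_div, mul_neg, neg_neg]
    positivity
  have im2 : (d⁻¹ * (lat o δ (x + 1, y) - p)).im < 0 := by
    have e : d⁻¹ * (lat o δ (x + 1, y) - p) = 1 - δ * (I * d⁻¹) := by
      have : lat o δ (x + 1, y) - p = d - δ * I := by
        rw [hd]; apply Complex.ext
        · simp [lat, hpre]; ring
        · simp [lat, hpim]; ring
      rw [this, mul_sub, inv_mul_cancel₀ hd0]; ring
    rw [e, sub_im, im_ofReal_mul, I_mul_im, inv_re, hd]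
    have hn : 0 < normSq (⟨δ * s, δ * t⟩ : ℂ) := normSq_pos.2 (hd ▸ hd0)
    simp only [one_im, zero_sub, Left.neg_neg_iff]
    positivity
  have l1 := log_neg_sub_log_pos im1
  have l2 := log_neg_sub_log_neg im2
  have hpi : (Real.pi : ℂ) * I ≠ 0 := by simp [Real.pi_ne_zero]
  rw [neg_mul, neg_mul] at W
  rcases hab with ⟨ha, hb⟩ | ⟨hb, ha⟩ <;> rw [ha, hb] at W <;> rw [hb] at E1 <;> rw [ha] at E2
  · apply hpi; linear_combination (1/2 : ℂ) * (-(W + E1 - E2) + l1 - l2)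
  · apply hpi; linear_combination (1/2 : ℂ) * (W + E1 - E2 + l1 - l2)

end LatticeLoop

namespace LatticeLoop

open Complex Set

section Topo

variable {W : Set ℂ}

/-- The class of a path staying in `B`. -/
def InB (B : Set ℂ) {a b : W} (f : FundamentalGroupoid.mk a ⟶ FundamentalGroupoid.mk b) : Prop :=
  ∃ γ : Path a b, (∀ t, (γ t : ℂ) ∈ B) ∧ f = FundamentalGroupoid.fromPath (.mk γ)

theorem InB.comp {B : Set ℂ} {a b c : W} {f : FundamentalGroupoid.mk a ⟶ FundamentalGroupoid.mk b}
    {g : FundamentalGroupoid.mk b ⟶ FundamentalGroupoid.mk c} (hf : InB B f) (hg : InB B g) :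
    InB B (f ≫ g) := by
  obtain ⟨γ, h, rfl⟩ := hf
  obtain ⟨γ', h', rfl⟩ := hg
  refine ⟨γ.trans γ', ?_, rfl⟩
  intro t
  have : γ.trans γ' t ∈ range (γ.trans γ') := mem_range_self t
  rw [Path.trans_range] at this
  rcases this with ⟨s, hs⟩ | ⟨s, hs⟩
  · rw [← hs]; exact h s
  · rw [← hs]; exact h' s

theorem InB.inv {B : Set ℂ} {a b : W} {f : FundamentalGroupoid.mk a ⟶ FundamentalGroupoid.mk b}
    (hf : InB B f) : InB B (Groupoid.inv f) := by
  obtain ⟨γ, h, rfl⟩ := hf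
  exact ⟨γ.symm, fun t => h _, rfl⟩

theorem InB.id {B : Set ℂ} {a : W} (ha : (a : ℂ) ∈ B) : InB B (𝟙 (FundamentalGroupoid.mk a)) :=
  ⟨Path.refl a, fun _ => ha, rfl⟩

theorem InB.mono {B B' : Set ℂ} (hB : B ⊆ B') {a b : W}
    {f : FundamentalGroupoid.mk a ⟶ FundamentalGroupoid.mk b}
    (hf : InB B f) : InB B' f := by
  obtain ⟨γ, h, rfl⟩ := hf
  exact ⟨γ, fun t => hB (h t), rfl⟩

theorem InB.eq {B : Set ℂ} (hB : Convex ℝ B) (hBW : B ⊆ W) {a b : W}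
    {f g : FundamentalGroupoid.mk a ⟶ FundamentalGroupoid.mk b}
    (hf : InB B f) (hg : InB B g) : f = g := by
  obtain ⟨γ, h, rfl⟩ := hf
  obtain ⟨γ', h', rfl⟩ := hg
  rw [FundamentalGroupoid.fromPath_eq_iff_homotopic]
  have ha : (a : ℂ) ∈ B := by simpa using h 0
  have hb : (b : ℂ) ∈ B := by simpa using h 1
  have : ContractibleSpace B := hB.contractibleSpace ⟨_, ha⟩
  let lift : ∀ (σ : Path a b), (∀ t, (σ t : ℂ) ∈ B) → Path (⟨a, ha⟩ : B) ⟨b, hb⟩ := fun σ hσ =>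
    { toFun := fun t => ⟨σ t, hσ t⟩
      continuous_toFun := by fun_prop
      source' := by simp
      target' := by simp }
  have H := (SimplyConnectedSpace.paths_homotopic (lift γ h) (lift γ' h')).map
    (⟨inclusion hBW, continuous_inclusion hBW⟩ : C(B, W))
  exact H

/-- segment path -/
noncomputable def segW {a b : W} (h : segment ℝ (a : ℂ) b ⊆ W) : Path a b where
  toFun t := ⟨Path.segment (a : ℂ) b t, h (by
    rw [← Path.range_segment]; exact mem_range_self t)⟩
  continuous_toFun := by fun_prop
  source' := by simp
  target' := by simp

/-- class of the segment path -/
noncomputable def segC {a b : W} (h : segment ℝ (a : ℂ) b ⊆ W) :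
    FundamentalGroupoid.mk a ⟶ FundamentalGroupoid.mk b :=
  FundamentalGroupoid.fromPath (.mk (segW h))

theorem segC_inB {a b : W} (h : segment ℝ (a : ℂ) b ⊆ W) :
    InB (segment ℝ (a : ℂ) b) (segC h) :=
  ⟨segW h, fun t => by
    rw [← Path.range_segment]; exact mem_range_self (f := Path.segment (a : ℂ) b) t, rfl⟩

theorem segC_inB' {B : Set ℂ} (hB : Convex ℝ B) {a b : W} (h : segment ℝ (a : ℂ) b ⊆ W)
    (ha : (a : ℂ) ∈ B) (hb : (b : ℂ) ∈ B) : InB B (segC h) :=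
  (segC_inB h).mono (hB.segment_subset ha hb)

variable (W) (o : ℂ) (δ : ℝ)

/-- vertices of the lattice in `W` -/
abbrev Vert := {u : ℕ × ℕ // lat o δ u ∈ W}

/-- lattice graph in `W` -/
def latG : SimpleGraph (Vert W o δ) where
  Adj u w := UAdj u.1 w.1 ∧ segment ℝ (lat o δ u.1) (lat o δ w.1) ⊆ W
  symm := ⟨by
    rintro u w ⟨h, h'⟩
    refine ⟨?_, by rwa [segment_symm]⟩
    unfold UAdj at *; omega⟩
  loopless := ⟨by
    rintro u ⟨h, -⟩
    unfold UAdj at h; omega⟩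

/-- vertex as an object of the groupoid -/
noncomputable def obW (u : Vert W o δ) : FundamentalGroupoid W := FundamentalGroupoid.mk ⟨lat o δ u.1, u.2⟩

/-- edge as a morphism -/
noncomputable def phiW (u w : Vert W o δ) (h : (latG W o δ).Adj u w) : obW W o δ u ⟶ obW W o δ w :=
  segC (a := ⟨lat o δ u.1, u.2⟩) (b := ⟨lat o δ w.1, w.2⟩) h.2

/-- The key property used about `W`: every point outside is detected by a logarithm. -/
theorem closed_walk_trivial (hδ : 0 < δ)
    (hW : ∀ B : Set ℂ, Convex ℝ B → (B ∩ W).Nonempty → ¬ B ⊆ W → ∃ p ∈ B, p ∉ W ∧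
      ∃ L : ℂ → ℂ, ContinuousOn L W ∧ ∀ z ∈ W, exp (L z) = z - p)
    (u : Vert W o δ) (p : (latG W o δ).Walk u u) :
    hom (latG W o δ) (obW W o δ) (phiW W o δ) p = 𝟙 _ := by
  refine hom_closed_eq_id (latG W o δ) (obW W o δ) (phiW W o δ) Subtype.val
    Subtype.val_injective (fun u w h => h.1) ?_ ?_ _ u p rfl
  · intro u w h
    have h1 := segC_inB (a := ⟨lat o δ u.1, u.2⟩) (b := ⟨lat o δ w.1, w.2⟩) h.2
    have h2 := segC_inB' (convex_segment (lat o δ u.1) (lat o δ w.1))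
      (a := ⟨lat o δ w.1, w.2⟩) (b := ⟨lat o δ u.1, u.2⟩) h.symm.2
      (right_mem_segment _ _ _) (left_mem_segment _ _ _)
    exact InB.eq (convex_segment _ _) h.2 (h1.comp h2) (InB.id (left_mem_segment _ _ _))
  · intro v a b x y hva hbv q hv hab hq
    set Q : Set ℂ := {z | o.re + δ * x ≤ z.re ∧ z.re ≤ o.re + δ * (x + 1) ∧
      o.im + δ * y ≤ z.im ∧ z.im ≤ o.im + δ * (y + 1)} with hQ
    have hQc : Convex ℝ Q := by
      intro z hz w hw α β hα hβ hαβ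
      obtain ⟨z1, z2, z3, z4⟩ := hz
      obtain ⟨w1, w2, w3, w4⟩ := hw
      have : β = 1 - α := by linarith
      subst this
      refine ⟨?_, ?_, ?_, ?_⟩ <;> simp <;> nlinarith
    have hvQ : lat o δ v.1 ∈ Q := by
      rw [hv]; simp only [hQ, lat, mem_ofPred_eq]; push_cast
      refine ⟨?_, ?_, ?_, ?_⟩ <;> nlinarith
    have m1 : lat o δ (x, y + 1) ∈ Q := by
      simp only [hQ, lat, mem_ofPred_eq]; push_cast
      refine ⟨?_, ?_, ?_, ?_⟩ <;> nlinarith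
    have m2 : lat o δ (x + 1, y) ∈ Q := by
      simp only [hQ, lat, mem_ofPred_eq]; push_cast
      refine ⟨?_, ?_, ?_, ?_⟩ <;> nlinarith
    have hcQ : lat o δ (x, y) ∈ Q := by
      simp only [hQ, lat, mem_ofPred_eq]
      refine ⟨?_, ?_, ?_, ?_⟩ <;> nlinarith
    have haQ : lat o δ a.1 ∈ Q := by
      rcases hab with ⟨h, h'⟩ | ⟨h', h⟩ <;> rw [h] <;> assumption
    have hbQ : lat o δ b.1 ∈ Q := by
      rcases hab with ⟨h', h⟩ | ⟨h, h'⟩ <;> rw [h] <;> assumption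
    have hQW : Q ⊆ W := by
      by_contra hcon
      obtain ⟨p, hpQ, hpW, L, hL, hexp⟩ := hW Q hQc ⟨_, hvQ, v.2⟩ hcon
      obtain ⟨p1, p2, p3, p4⟩ := hpQ
      have edge1 : segment ℝ (lat o δ (x, y + 1)) (lat o δ (x + 1, y + 1)) ⊆ W := by
        rcases hab with ⟨h, h'⟩ | ⟨h, h'⟩
        · have := hva.symm.2; rwa [h, hv] at this
        · have := hbv.2; rwa [h, hv] at this
      have edge2 : segment ℝ (lat o δ (x + 1, y)) (lat o δ (x + 1, y + 1)) ⊆ W := by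
        rcases hab with ⟨h, h'⟩ | ⟨h, h'⟩
        · have := hbv.2; rwa [h', hv] at this
        · have := hva.symm.2; rwa [h', hv] at this
      have hs1 : (o.re + δ * (x + 1) - p.re) / δ ≤ 1 := by rw [div_le_one hδ]; linarith
      have ht1 : (o.im + δ * (y + 1) - p.im) / δ ≤ 1 := by rw [div_le_one hδ]; linarith
      have hs0 : 0 ≤ (o.re + δ * (x + 1) - p.re) / δ := div_nonneg (by linarith) hδ.le
      have ht0 : 0 ≤ (o.im + δ * (y + 1) - p.im) / δ := div_nonneg (by linarith) hδ.le
      have hpre : p.re = o.re + δ * ((x : ℝ) + 1 - (o.re + δ * (x + 1) - p.re) / δ) := by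
        field_simp; ring
      have hpim : p.im = o.im + δ * ((y : ℝ) + 1 - (o.im + δ * (y + 1) - p.im) / δ) := by
        field_simp; ring
      generalize (o.re + δ * (x + 1) - p.re) / δ = s at *
      generalize (o.im + δ * (y + 1) - p.im) / δ = t at *
      have hs : 0 < s := by
        rcases hs0.eq_or_lt with h | h
        · exfalso; apply hpW; apply edge2
          rw [segment_eq_image']
          refine ⟨1 - t, ⟨by linarith, by linarith⟩, ?_⟩
          apply Complex.ext
          · simp [lat, hpre, ← h]
          · simp [lat, hpim]; ring
        · exact h
      have ht : 0 < t := by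
        rcases ht0.eq_or_lt with h | h
        · exfalso; apply hpW; apply edge1
          rw [segment_eq_image']
          refine ⟨1 - s, ⟨by linarith, by linarith⟩, ?_⟩
          apply Complex.ext
          · simp [lat, hpre]; ring
          · simp [lat, hpim, ← h]
        · exact h
      exact no_log hδ hL hexp hpW hs hs1 ht ht1 hpre hpim (latG W o δ) Subtype.val
        (fun u w h => h.1) (fun u w h => h.2) hv hva hbv hab q hq
    refine ⟨⟨(x, y), hQW hcQ⟩, ⟨?_, (hQc.segment_subset hcQ haQ).trans hQW⟩,
      ⟨?_, (hQc.segment_subset hbQ hcQ).trans hQW⟩, rfl, ?_⟩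
    · unfold UAdj; rcases hab with ⟨h, h'⟩ | ⟨h, h'⟩ <;> simp [h, h']
    · unfold UAdj; rcases hab with ⟨h, h'⟩ | ⟨h, h'⟩ <;> simp [h, h']
    · exact InB.eq hQc hQW ((segC_inB' hQc _ hbQ hvQ).comp (segC_inB' hQc _ hvQ haQ))
        ((segC_inB' hQc _ hbQ hcQ).comp (segC_inB' hQc _ hcQ haQ))

end Topo

end LatticeLoop

namespace LatticeLoop

open Complex Set

section Approx

variable (W : Set ℂ) (o : ℂ) (δ : ℝ)

/-- lattice point below and to the left of a point -/
noncomputable def fl (a : ℂ) : ℕ × ℕ := (⌊(a.re - o.re) / δ⌋₊, ⌊(a.im - o.im) / δ⌋₊)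

/-- points deep inside `W` -/
def Deep (a : ℂ) : Prop := Metric.ball a (10 * δ) ⊆ W ∧ o.re ≤ a.re ∧ o.im ≤ a.im

variable {W o δ}

theorem fl_spec (hδ : 0 < δ) {a : ℂ} (ha : Deep W o δ a) :
    (lat o δ (fl o δ a)).re ≤ a.re ∧ a.re < (lat o δ (fl o δ a)).re + δ ∧
    (lat o δ (fl o δ a)).im ≤ a.im ∧ a.im < (lat o δ (fl o δ a)).im + δ := by
  obtain ⟨-, h1, h2⟩ := ha
  have a1 := Nat.floor_le (div_nonneg (sub_nonneg.2 h1) hδ.le)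
  have a2 := Nat.lt_floor_add_one ((a.re - o.re) / δ)
  have b1 := Nat.floor_le (div_nonneg (sub_nonneg.2 h2) hδ.le)
  have b2 := Nat.lt_floor_add_one ((a.im - o.im) / δ)
  rw [le_div_iff₀ hδ] at a1 b1
  rw [div_lt_iff₀ hδ] at a2 b2
  simp only [lat, fl]
  refine ⟨?_, ?_, ?_, ?_⟩ <;> nlinarith

theorem mem_ball_of (hδ : 0 < δ) {a z : ℂ} (h1 : |z.re - a.re| ≤ 3 * δ)
    (h2 : |z.im - a.im| ≤ 3 * δ) : z ∈ Metric.ball a (10 * δ) := by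
  rw [Metric.mem_ball, dist_eq_norm]
  have := Complex.norm_le_abs_re_add_abs_im (z - a)
  simp only [sub_re, sub_im] at this
  linarith

theorem fl_mem_ball (hδ : 0 < δ) {a : ℂ} (ha : Deep W o δ a) :
    lat o δ (fl o δ a) ∈ Metric.ball a (10 * δ) := by
  obtain ⟨h1, h2, h3, h4⟩ := fl_spec hδ ha
  apply mem_ball_of hδ <;> rw [abs_le] <;> constructor <;> linarith

/-- the vertex near a point -/
noncomputable def near (hδ : 0 < δ) {a : ℂ} (ha : Deep W o δ a) : Vert W o δ :=
  ⟨fl o δ a, ha.1 (fl_mem_ball hδ ha)⟩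

theorem conn_aux (hδ : 0 < δ) {a : ℂ} (ha : Deep W o δ a) :
    segment ℝ a (lat o δ (fl o δ a)) ⊆ Metric.ball a (10 * δ) :=
  (convex_ball _ _).segment_subset (Metric.mem_ball_self (by linarith)) (fl_mem_ball hδ ha)

/-- the connecting morphism -/
noncomputable def conn (hδ : 0 < δ) {a : W} (ha : Deep W o δ a) :
    FundamentalGroupoid.mk a ⟶ obW W o δ (near hδ ha) :=
  segC (b := ⟨lat o δ (fl o δ a), ha.1 (fl_mem_ball hδ ha)⟩) ((conn_aux hδ ha).trans ha.1)

/-- morphisms represented by lattice walks -/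
def Good (hδ : 0 < δ) {a b : W} (ha : Deep W o δ a) (hb : Deep W o δ b)
    (f : FundamentalGroupoid.mk a ⟶ FundamentalGroupoid.mk b) : Prop :=
  ∃ w : (latG W o δ).Walk (near hδ ha) (near hδ hb),
    f = conn hδ ha ≫ hom (latG W o δ) (obW W o δ) (phiW W o δ) w ≫ Groupoid.inv (conn hδ hb)

theorem step_walk {B : Set ℂ} (hB : Convex ℝ B) (hBW : B ⊆ W) (u w : Vert W o δ)
    (hu : lat o δ u.1 ∈ B) (hw : lat o δ w.1 ∈ B) (h : u.1 = w.1 ∨ UAdj u.1 w.1) :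
    ∃ p : (latG W o δ).Walk u w, InB (W := W) (a := ⟨lat o δ u.1, u.2⟩) (b := ⟨lat o δ w.1, w.2⟩) B
      (hom (latG W o δ) (obW W o δ) (phiW W o δ) p) := by
  rcases h with h | h
  · obtain rfl := Subtype.ext h
    exact ⟨.nil, InB.id (a := ⟨lat o δ u.1, u.2⟩) hu⟩
  · have hadj : (latG W o δ).Adj u w := ⟨h, (hB.segment_subset hu hw).trans hBW⟩
    refine ⟨.cons hadj .nil, ?_⟩
    have : hom (latG W o δ) (obW W o δ) (phiW W o δ) (.cons hadj .nil) = phiW W o δ u w hadj := by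
      simp [hom]
    rw [this]
    exact segC_inB' hB (a := ⟨lat o δ u.1, u.2⟩) (b := ⟨lat o δ w.1, w.2⟩) _ hu hw

theorem good_of_small (hδ : 0 < δ) {a b : W} (ha : Deep W o δ a) (hb : Deep W o δ b)
    (σ : Path a b) (hσ : ∀ t, (σ t : ℂ) ∈ Metric.ball (a : ℂ) δ) :
    Good hδ ha hb (FundamentalGroupoid.fromPath (.mk σ)) := by
  have hbB : (b : ℂ) ∈ Metric.ball (a : ℂ) δ := by simpa using hσ 1
  have hBc : Convex ℝ (Metric.ball (a : ℂ) (10 * δ)) := convex_ball _ _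
  obtain ⟨a1, a2, a3, a4⟩ := fl_spec hδ ha
  obtain ⟨b1, b2, b3, b4⟩ := fl_spec hδ hb
  rw [Metric.mem_ball, dist_eq_norm] at hbB
  have r1 := (Complex.abs_re_le_norm ((b : ℂ) - a)).trans_lt hbB
  have i1 := (Complex.abs_im_le_norm ((b : ℂ) - a)).trans_lt hbB
  rw [sub_re, abs_lt] at r1
  rw [sub_im, abs_lt] at i1
  have hnb : lat o δ (fl o δ b) ∈ Metric.ball (a : ℂ) (10 * δ) := by
    apply mem_ball_of hδ <;> rw [abs_le] <;> constructor <;> linarith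
  have hm : lat o δ ((fl o δ b).1, (fl o δ a).2) ∈ Metric.ball (a : ℂ) (10 * δ) := by
    have e1 : (lat o δ ((fl o δ b).1, (fl o δ a).2)).re = (lat o δ (fl o δ b)).re := rfl
    have e2 : (lat o δ ((fl o δ b).1, (fl o δ a).2)).im = (lat o δ (fl o δ a)).im := rfl
    apply mem_ball_of hδ <;> rw [abs_le] <;> constructor <;> linarith
  have c1 : (fl o δ b).1 < (fl o δ a).1 + 2 := by
    simp only [lat] at *
    have : δ * ((fl o δ b).1 : ℝ) < δ * ((fl o δ a).1 + 2) := by linarith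
    exact_mod_cast lt_of_mul_lt_mul_left this hδ.le
  have c2 : (fl o δ a).1 < (fl o δ b).1 + 2 := by
    simp only [lat] at *
    have : δ * ((fl o δ a).1 : ℝ) < δ * ((fl o δ b).1 + 2) := by linarith
    exact_mod_cast lt_of_mul_lt_mul_left this hδ.le
  have c3 : (fl o δ b).2 < (fl o δ a).2 + 2 := by
    simp only [lat] at *
    have : δ * ((fl o δ b).2 : ℝ) < δ * ((fl o δ a).2 + 2) := by linarith
    exact_mod_cast lt_of_mul_lt_mul_left this hδ.le
  have c4 : (fl o δ a).2 < (fl o δ b).2 + 2 := by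
    simp only [lat] at *
    have : δ * ((fl o δ a).2 : ℝ) < δ * ((fl o δ b).2 + 2) := by linarith
    exact_mod_cast lt_of_mul_lt_mul_left this hδ.le
  let m : Vert W o δ := ⟨((fl o δ b).1, (fl o δ a).2), ha.1 hm⟩
  obtain ⟨p, hp⟩ := step_walk hBc ha.1 (near hδ ha) m (fl_mem_ball hδ ha) hm (by
    change fl o δ a = ((fl o δ b).1, (fl o δ a).2) ∨ UAdj (fl o δ a) ((fl o δ b).1, (fl o δ a).2)
    generalize fl o δ a = A at c1 c2 ⊢
    generalize fl o δ b = B at c1 c2 ⊢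
    obtain ⟨A1, A2⟩ := A
    obtain ⟨B1, B2⟩ := B
    simp only [UAdj, Prod.mk.injEq, and_true, true_and] at c1 c2 c3 c4 ⊢
    omega)
  obtain ⟨q, hq⟩ := step_walk hBc ha.1 m (near hδ hb) hm hnb (by
    change ((fl o δ b).1, (fl o δ a).2) = fl o δ b ∨ UAdj ((fl o δ b).1, (fl o δ a).2) (fl o δ b)
    generalize fl o δ a = A at c3 c4 ⊢
    generalize fl o δ b = B at c3 c4 ⊢
    obtain ⟨A1, A2⟩ := A
    obtain ⟨B1, B2⟩ := B
    simp only [UAdj, Prod.mk.injEq, and_true, true_and] at c1 c2 c3 c4 ⊢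
    omega)
  refine ⟨p.append q, ?_⟩
  rw [hom_append]
  have hsub : Metric.ball (a : ℂ) δ ⊆ Metric.ball (a : ℂ) (10 * δ) :=
    Metric.ball_subset_ball (by linarith)
  refine InB.eq hBc ha.1 ⟨σ, fun t => hsub (hσ t), rfl⟩ ?_
  have A : InB (Metric.ball (a : ℂ) (10 * δ))
      (b := ⟨lat o δ (fl o δ a), ha.1 (fl_mem_ball hδ ha)⟩) (conn hδ ha) :=
    segC_inB' hBc _ (Metric.mem_ball_self (by linarith)) (fl_mem_ball hδ ha)
  have B : InB (Metric.ball (a : ℂ) (10 * δ))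
      (b := ⟨lat o δ (fl o δ b), hb.1 (fl_mem_ball hδ hb)⟩) (conn hδ hb) :=
    segC_inB' hBc _ (by simpa using hsub (hσ 1)) hnb
  exact A.comp ((hp.comp hq).comp B.inv)

theorem Good.comp (hδ : 0 < δ) {a b c : W} (ha : Deep W o δ a) (hb : Deep W o δ b)
    (hc : Deep W o δ c)
    {f : FundamentalGroupoid.mk a ⟶ FundamentalGroupoid.mk b}
    {g : FundamentalGroupoid.mk b ⟶ FundamentalGroupoid.mk c}
    (hf : Good hδ ha hb f) (hg : Good hδ hb hc g) : Good hδ ha hc (f ≫ g) := by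
  obtain ⟨p, rfl⟩ := hf
  obtain ⟨q, rfl⟩ := hg
  exact ⟨p.append q, by rw [hom_append]; simp⟩

theorem good_path (hδ : 0 < δ) {a b : W} (γ : Path a b) (hγ : ∀ t, Deep W o δ (γ t))
    (ha : Deep W o δ a) (hb : Deep W o δ b) :
    Good hδ ha hb (FundamentalGroupoid.fromPath (.mk γ)) := by
  have huc : UniformContinuous (fun t => (γ t : ℂ)) :=
    CompactSpace.uniformContinuous_of_continuous (by fun_prop)
  rw [Metric.uniformContinuous_iff] at huc
  obtain ⟨η, hη, H⟩ := huc δ hδ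
  obtain ⟨N, hN⟩ := exists_nat_one_div_lt hη
  let τ : ℕ → unitInterval := fun k => projIcc 0 1 zero_le_one ((k : ℝ) / (N + 1))
  have hmono : Monotone τ := by
    intro i j hij
    apply monotone_projIcc
    gcongr
  have hdist : ∀ k, dist (τ k) (τ (k + 1)) < η := by
    intro k
    refine lt_of_le_of_lt ?_ hN
    rw [Subtype.dist_eq]
    have h1 : (τ k : ℝ) ≤ τ (k + 1) := hmono (Nat.le_succ k)
    rw [dist_comm, Real.dist_eq, abs_of_nonneg (by linarith)]
    have hpos : (0 : ℝ) < N + 1 := by positivity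
    have e : ((k + 1 : ℕ) : ℝ) / (N + 1) = (k : ℝ) / (N + 1) + 1 / (N + 1) := by
      push_cast; ring
    have hp : 0 < 1 / ((N : ℝ) + 1) := by positivity
    simp only [τ, coe_projIcc, e]
    generalize (k : ℝ) / (N + 1) = A
    generalize 1 / ((N : ℝ) + 1) = B at *
    rcases le_total A 1 with h | h
    · rw [min_eq_right h]
      have : max 0 (min 1 (A + B)) ≤ max 0 A + B := by
        apply max_le
        · have := le_max_left 0 A; linarith
        · have := le_max_right 0 A
          exact (min_le_right _ _).trans (by linarith)
      linarith
    · rw [min_eq_left h, min_eq_left (by linarith)]; simpa using hp.le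
  have ind : ∀ k, Good hδ (hγ (τ 0)) (hγ (τ k))
      (FundamentalGroupoid.fromPath (.mk (γ.subpath (τ 0) (τ k)))) := by
    intro k
    induction k with
    | zero =>
      apply good_of_small
      intro t
      simp [hδ]
    | succ k ih =>
      have h2 : Good hδ (hγ (τ k)) (hγ (τ (k + 1)))
          (FundamentalGroupoid.fromPath (.mk (γ.subpath (τ k) (τ (k + 1))))) := by
        apply good_of_small
        intro t
        have : γ.subpath (τ k) (τ (k + 1)) t ∈ range (γ.subpath (τ k) (τ (k + 1))) :=
          mem_range_self t
        rw [Path.range_subpath_of_le _ _ _ (hmono (Nat.le_succ k))] at this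
        obtain ⟨r, ⟨hr1, hr2⟩, hr⟩ := this
        rw [← hr]
        apply H
        refine lt_of_le_of_lt ?_ (hdist k)
        rw [Subtype.dist_eq, Subtype.dist_eq, Real.dist_eq, dist_comm, Real.dist_eq]
        have hr1' : (τ k : ℝ) ≤ r := hr1
        have hr2' : (r : ℝ) ≤ τ (k + 1) := hr2
        rw [abs_of_nonneg (by linarith), abs_of_nonneg (by linarith)]
        linarith
      have h3 := Good.comp hδ _ _ _ ih h2
      have e : (FundamentalGroupoid.fromPath (.mk (γ.subpath (τ 0) (τ k)))) ≫
          (FundamentalGroupoid.fromPath (.mk (γ.subpath (τ k) (τ (k + 1))))) =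
          (FundamentalGroupoid.fromPath (.mk (γ.subpath (τ 0) (τ (k + 1))))) :=
        (FundamentalGroupoid.fromPath_eq_iff_homotopic _ _).2
          ⟨Path.Homotopy.subpathTransSubpath γ _ _ _⟩
      rwa [e] at h3
  have hfin := ind (N + 1)
  have t0 : τ 0 = 0 := by
    simp only [τ, Nat.cast_zero, zero_div]; exact projIcc_left _
  have t1 : τ (N + 1) = 1 := by
    have : ((N + 1 : ℕ) : ℝ) / (N + 1) = 1 := by
      push_cast; field_simp
    simp only [τ, this]; exact projIcc_right _
  generalize τ 0 = T0 at *
  generalize τ (N + 1) = T1 at *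
  subst t0 t1
  rw [Path.subpath_zero_one] at hfin
  have key : ∀ (a' b' : W) (h1 : a' = a) (h2 : b' = b) (ha' : Deep W o δ a')
      (hb' : Deep W o δ b'), Good hδ ha' hb' (FundamentalGroupoid.fromPath (.mk (γ.cast h1 h2))) →
      Good hδ ha hb (FundamentalGroupoid.fromPath (.mk γ)) := by
    rintro a' b' rfl rfl _ _ h
    exact h
  exact key _ _ _ _ _ _ hfin

end Approx

theorem simplyConnected_of_log {W : Set ℂ} (hWo : IsOpen W) (hWc : IsPathConnected W)
    (hW : ∀ B : Set ℂ, Convex ℝ B → (B ∩ W).Nonempty → ¬ B ⊆ W → ∃ p ∈ B, p ∉ W ∧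
      ∃ L : ℂ → ℂ, ContinuousOn L W ∧ ∀ z ∈ W, exp (L z) = z - p) :
    SimplyConnectedSpace W := by
  rw [simply_connected_iff_loops_nullhomotopic]
  refine ⟨isPathConnected_iff_pathConnectedSpace.1 hWc, ?_⟩
  intro x γ
  have hc : IsCompact (range fun t => (γ t : ℂ)) := isCompact_range (by fun_prop)
  obtain ⟨ε, hε, hth⟩ := hc.exists_thickening_subset_open hWo (by rintro _ ⟨t, rfl⟩; exact (γ t).2)
  obtain ⟨R, hR⟩ := hc.isBounded.exists_norm_le
  have hδ : 0 < ε / 10 := by positivity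
  have hdeep : ∀ t, Deep W ⟨-R, -R⟩ (ε / 10) (γ t) := by
    intro t
    have hn := hR _ (mem_range_self t)
    refine ⟨?_, ?_, ?_⟩
    · rw [mul_div_cancel₀ _ (by norm_num)]
      exact (Metric.ball_subset_thickening (mem_range_self t) ε).trans hth
    · have := (abs_le.1 ((Complex.abs_re_le_norm _).trans hn)).1; simpa using this
    · have := (abs_le.1 ((Complex.abs_im_le_norm _).trans hn)).1; simpa using this
  have hx : Deep W ⟨-R, -R⟩ (ε / 10) x := by simpa using hdeep 0
  obtain ⟨w, hw⟩ := good_path hδ γ hdeep hx hx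
  rw [closed_walk_trivial W _ _ hδ hW] at hw
  rw [← FundamentalGroupoid.fromPath_eq_iff_homotopic, hw]
  simp
  rfl

end LatticeLoop

theorem component_of_inter_simplyConnected (U V : Set ℂ)
    (hUopen : IsOpen U) (hVopen : IsOpen V)
    (hU : SimplyConnectedSpace U) (hV : SimplyConnectedSpace V) :
    ∀ x ∈ U ∩ V, SimplyConnectedSpace (connectedComponentIn (U ∩ V) x) := by
  intro x hx
  have hopen : IsOpen (U ∩ V) := hUopen.inter hVopen
  have hWo : IsOpen (connectedComponentIn (U ∩ V) x) := hopen.connectedComponentIn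
  have hsub : connectedComponentIn (U ∩ V) x ⊆ U ∩ V := connectedComponentIn_subset _ _
  have hWc : IsConnected (connectedComponentIn (U ∩ V) x) :=
    isConnected_connectedComponentIn_iff.2 hx
  refine LatticeLoop.simplyConnected_of_log hWo (hWo.isConnected_iff_isPathConnected.1 hWc) ?_
  intro B hB hne hBW
  have h1 : ¬ B ⊆ U ∩ V := by
    intro hBUV
    apply hBW
    obtain ⟨z, hzB, hzW⟩ := hne
    rw [connectedComponentIn_eq hzW]
    exact hB.isPreconnected.subset_connectedComponentIn hzB hBUV
  obtain ⟨p, hpB, hp⟩ := Set.not_subset.1 h1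
  refine ⟨p, hpB, fun h => hp (hsub h), ?_⟩
  have key : ∀ S : Set ℂ, IsOpen S → SimplyConnectedSpace S → U ∩ V ⊆ S → p ∉ S →
      ∃ L : ℂ → ℂ, ContinuousOn L (connectedComponentIn (U ∩ V) x) ∧
        ∀ z ∈ connectedComponentIn (U ∩ V) x, Complex.exp (L z) = z - p := by
    intro S hSo hS hUS hpS
    obtain ⟨f, hf, hfe⟩ := Complex.exists_continuousOn_eqOn_exp_comp (U := S) hS hSo
      (g := fun z => z - p) (by fun_prop) (by
        rintro ⟨z, hz, hzp⟩
        rw [sub_eq_zero.1 hzp] at hz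
        exact hpS hz)
    exact ⟨f, hf.mono (hsub.trans hUS), fun z hz => hfe (hUS (hsub hz))⟩
  by_cases hpU : p ∈ U
  · exact key V hVopen hV Set.inter_subset_right (fun h => hp ⟨hpU, h⟩)
  · exact key U hUopen hU Set.inter_subset_left hpU
end
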